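/- arXiv:2310.17628 — 6 statements merged into one kernel-verified Lean document; each statement's English description precedes it below -/
import Mathlib

section
/- Let K be an algebraically closed field with a nonarchimedean multiplicative absolute value |·|. Let a ∈ K, r > 0, and let f ∈ K[y] be a nonzero polynomial with Taylor expansion f = Σᵢ cᵢ(y−a)ⁱ about a. If b ∈ K satisfies |b−a| ≤ r and |b−z| ≥ r for every root z of f, then |f(b)| = maxᵢ |cᵢ| rⁱ. In particular, the Gauss norm ‖f‖_{ζ(a,r)} is attained by |f(b)| at every point b of the closed disk D̄(a,r) lying outside the finitely many open disks D(z,r) centred at roots z of f. -/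
open Polynomial in
theorem stmt5_aux {K : Type*} [Field K] (v : AbsoluteValue K ℝ)
    (hna : ∀ x y, v (x + y) ≤ max (v x) (v y))
    (a b : K) (r : ℝ) (hr : 0 < r) (hb : v (b - a) ≤ r) (c : K) (s : Multiset K) :
    (∀ z ∈ s, r ≤ v (b - z)) → ∀ i : ℕ,
      v ((taylor a (C c * (s.map fun z => X - C z).prod)).coeff i) * r ^ i
        ≤ v (eval b (C c * (s.map fun z => X - C z).prod)) := by
  induction s using Multiset.induction_on with
  | empty =>
    intro _ i
    rcases i with _ | i
    · simp
    · simp [coeff_C]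
  | cons z s ih =>
    intro h i
    have ih' := ih (fun w hw => h w (Multiset.mem_cons_of_mem hw))
    have hz := h z (Multiset.mem_cons_self z s)
    set g := C c * (s.map fun z => X - C z).prod with hg
    have e : C c * ((z ::ₘ s).map fun z => X - C z).prod = (X - C z) * g := by
      rw [Multiset.map_cons, Multiset.prod_cons, hg]; ring
    rw [e]
    have haz : v (a - z) ≤ v (b - z) := by
      have h1 := hna (a - b) (b - z)
      rw [sub_add_sub_cancel, v.map_sub a b] at h1
      exact h1.trans (max_le (hb.trans hz) le_rfl)
    have e2 : taylor a ((X - C z) * g) = X * taylor a g + C (a - z) * taylor a g := by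
      rw [taylor_mul, map_sub, taylor_X, taylor_C, C_sub]; ring
    have e3 : v (eval b ((X - C z) * g)) = v (b - z) * v (eval b g) := by simp
    rw [e2, e3, coeff_add, coeff_C_mul]
    have hG : 0 ≤ v (eval b g) := v.nonneg _
    have hri : 0 ≤ r ^ i := by positivity
    refine (mul_le_mul_of_nonneg_right (hna _ _) hri).trans ?_
    rw [max_mul_of_nonneg _ _ hri]
    refine max_le ?_ ?_
    · rcases i with _ | i
      · simp only [coeff_X_mul_zero, map_zero, zero_mul]
        exact mul_nonneg (v.nonneg _) hG
      · rw [coeff_X_mul, pow_succ']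
        calc _ = r * (v ((taylor a g).coeff i) * r ^ i) := by ring
          _ ≤ _ := mul_le_mul hz (ih' i) (mul_nonneg (v.nonneg _) (by positivity)) (v.nonneg _)
    · rw [map_mul, mul_assoc]
      exact mul_le_mul haz (ih' i) (mul_nonneg (v.nonneg _) hri) (v.nonneg _)


/-- A nonarchimedean multiplicative absolute value on a commutative ring. -/
def IsNAAbsValue {R : Type*} [CommRing R] (v : R → ℝ) : Prop :=
  (∀ x, 0 ≤ v x) ∧ (∀ x, v x = 0 ↔ x = 0) ∧ (∀ x y, v (x * y) = v x * v y) ∧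
    (∀ x y, v (x + y) ≤ max (v x) (v y))

/-- Over an algebraically closed nonarchimedean field, if `b` lies in the closed disk
`D̄(a,r)` and `|b - z| ≥ r` for every root `z` of the nonzero polynomial `f`, then
`|f(b)|` equals the Gauss norm `max_i |c_i| r^i`, where `c_i` are the Taylor
coefficients of `f` about `a`. -/
theorem stmt5 {K : Type*} [Field K] [IsAlgClosed K] (abv : K → ℝ) (habv : IsNAAbsValue abv)
    (a : K) (r : ℝ) (hr : 0 < r) (f : Polynomial K) (hf : f ≠ 0)
    (b : K) (hb : abv (b - a) ≤ r)
    (hroots : ∀ z : K, f.IsRoot z → r ≤ abv (b - z)) :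
    abv (Polynomial.eval b f)
      = ⨆ i : ℕ, abv ((Polynomial.taylor a f).coeff i) * r ^ i := by
  obtain ⟨h0, hz, hm, hna⟩ := habv
  let v : AbsoluteValue K ℝ :=
    { toFun := abv, map_mul' := hm, nonneg' := h0, eq_zero' := hz,
      add_le' := fun x y => (hna x y).trans
        (max_le (le_add_of_nonneg_right (h0 y)) (le_add_of_nonneg_left (h0 x))) }
  have key : ∀ i : ℕ, abv ((Polynomial.taylor a f).coeff i) * r ^ i
      ≤ abv (Polynomial.eval b f) := by
    intro i
    have h := stmt5_aux v hna a b r hr hb f.leadingCoeff f.roots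
      (fun z hz => hroots z (Polynomial.isRoot_of_mem_roots hz)) i
    rw [← (IsAlgClosed.splits f).eq_prod_roots] at h
    exact h
  have hbdd : BddAbove (Set.range fun i : ℕ =>
      abv ((Polynomial.taylor a f).coeff i) * r ^ i) :=
    ⟨_, by rintro _ ⟨i, rfl⟩; exact key i⟩
  refine le_antisymm ?_ (ciSup_le key)
  set M := ⨆ i : ℕ, abv ((Polynomial.taylor a f).coeff i) * r ^ i with hM
  have hle : ∀ i : ℕ, abv ((Polynomial.taylor a f).coeff i) * r ^ i ≤ M :=
    fun i => le_ciSup hbdd i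
  have hM0 : 0 ≤ M := (mul_nonneg (h0 _) (by positivity)).trans (hle 0)
  have e : Polynomial.eval b f = Polynomial.eval (b - a) (Polynomial.taylor a f) := by
    rw [Polynomial.taylor_eval, sub_add_cancel]
  rw [e, Polynomial.eval_eq_sum_range]
  refine Finset.sum_induction _ (fun x => abv x ≤ M)
    (fun x y hx hy => (hna x y).trans (max_le hx hy)) ?_ ?_
  · rw [(hz 0).2 rfl]; exact hM0
  · intro i _
    refine le_trans ?_ (hle i)
    have hp : abv ((b - a) ^ i) = abv (b - a) ^ i := map_pow v (b - a) i
    rw [hm, hp]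
    exact mul_le_mul_of_nonneg_left (pow_le_pow_left₀ (h0 _) hb i) (h0 _)
end

section
/- Let K be a field with a nonarchimedean multiplicative absolute value |·| and let r > 0. For a nonzero polynomial f = Σᵢ cᵢ yⁱ ∈ K[y], define the Weierstrass degree wdeg_r(f) to be the largest index d such that |c_d| r^d = maxᵢ |cᵢ| rⁱ. Then for all nonzero polynomials f, g ∈ K[y], wdeg_r(f·g) = wdeg_r(f) + wdeg_r(g). -/
/-- The Weierstrass degree of `f = Σᵢ cᵢ yⁱ` at radius `r`: the largest index `d` with
`|c_d| r^d = maxᵢ |cᵢ| rⁱ`. -/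
noncomputable def wdeg {K : Type*} [Field K] (abv : K → ℝ) (r : ℝ) (f : Polynomial K) : ℕ :=
  sSup {d : ℕ | abv (f.coeff d) * r ^ d = ⨆ i : ℕ, abv (f.coeff i) * r ^ i}

/-- `d` is the last index where the weighted coefficients attain their positive maximum `M`. -/
def WIdx {K : Type*} [Field K] (abv : K → ℝ) (r : ℝ) (f : Polynomial K) (d : ℕ) (M : ℝ) : Prop :=
  0 < M ∧ abv (f.coeff d) * r ^ d = M ∧ (∀ i, abv (f.coeff i) * r ^ i ≤ M) ∧
    ∀ i, d < i → abv (f.coeff i) * r ^ i < M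

theorem WIdx.wdeg_eq {K : Type*} [Field K] {abv : K → ℝ} {r : ℝ} {f : Polynomial K} {d : ℕ}
    {M : ℝ} (h : WIdx abv r f d M) : wdeg abv r f = d := by
  obtain ⟨_, h1, h2, h3⟩ := h
  have hsup : ⨆ i : ℕ, abv (f.coeff i) * r ^ i = M := by
    apply le_antisymm (ciSup_le h2)
    rw [← h1]
    exact le_ciSup (f := fun i : ℕ => abv (f.coeff i) * r ^ i)
      ⟨M, by rintro _ ⟨i, rfl⟩; exact h2 i⟩ d
  unfold wdeg
  rw [hsup]
  apply IsGreatest.csSup_eq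
  refine ⟨h1, fun i hi => ?_⟩
  by_contra hlt
  exact (h3 i (not_le.mp hlt)).ne hi

theorem exists_WIdx {K : Type*} [Field K] {abv : K → ℝ} (habv : IsNAAbsValue abv)
    {r : ℝ} (hr : 0 < r) {f : Polynomial K} (hf : f ≠ 0) : ∃ d M, WIdx abv r f d M := by
  obtain ⟨h0, hz, -, -⟩ := habv
  have hpos : ∀ i ∈ f.support, 0 < abv (f.coeff i) * r ^ i := fun i hi =>
    mul_pos (lt_of_le_of_ne (h0 _) (fun h => Polynomial.mem_support_iff.mp hi ((hz _).mp h.symm)))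
      (pow_pos hr i)
  have hzero : ∀ i, i ∉ f.support → abv (f.coeff i) * r ^ i = 0 := fun i hi => by
    rw [Polynomial.notMem_support_iff.mp hi, (hz 0).mpr rfl, zero_mul]
  obtain ⟨k, hk, hmax⟩ := f.support.exists_max_image (fun i => abv (f.coeff i) * r ^ i)
    (Polynomial.support_nonempty.mpr hf)
  obtain ⟨d, hd, hdmax⟩ := (f.support.filter
    (fun i => abv (f.coeff i) * r ^ i = abv (f.coeff k) * r ^ k)).exists_max_image id
    ⟨k, Finset.mem_filter.mpr ⟨hk, rfl⟩⟩
  have hle : ∀ i, abv (f.coeff i) * r ^ i ≤ abv (f.coeff k) * r ^ k := fun i => by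
    by_cases hi : i ∈ f.support
    · exact hmax i hi
    · rw [hzero i hi]; exact (hpos k hk).le
  refine ⟨d, abv (f.coeff k) * r ^ k, hpos k hk, (Finset.mem_filter.mp hd).2, hle, ?_⟩
  intro i hi
  refine lt_of_le_of_ne (hle i) (fun he => ?_)
  by_cases his : i ∈ f.support
  · exact absurd (hdmax i (Finset.mem_filter.mpr ⟨his, he⟩)) (not_le.mpr hi)
  · rw [hzero i his] at he
    exact (hpos k hk).ne he

theorem na_sum_lt {K ι : Type*} [Field K] {abv : K → ℝ} (habv : IsNAAbsValue abv)
    (s : Finset ι) (x : ι → K) {B : ℝ} (hB : 0 < B) (h : ∀ i ∈ s, abv (x i) < B) :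
    abv (∑ i ∈ s, x i) < B := by
  refine Finset.sum_induction x (fun y => abv y < B) (fun a b ha hb => ?_) ?_ h
  · exact (habv.2.2.2 a b).trans_lt (max_lt ha hb)
  · rwa [(habv.2.1 0).mpr rfl]

theorem na_sum_le {K ι : Type*} [Field K] {abv : K → ℝ} (habv : IsNAAbsValue abv)
    (s : Finset ι) (x : ι → K) {B : ℝ} (hB : 0 < B) (h : ∀ i ∈ s, abv (x i) ≤ B) :
    abv (∑ i ∈ s, x i) ≤ B := by
  refine Finset.sum_induction x (fun y => abv y ≤ B) (fun a b ha hb => ?_) ?_ h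
  · exact (habv.2.2.2 a b).trans (max_le ha hb)
  · rw [(habv.2.1 0).mpr rfl]; exact hB.le

theorem na_neg {K : Type*} [Field K] {abv : K → ℝ} (habv : IsNAAbsValue abv) (x : K) :
    abv (-x) = abv x := by
  obtain ⟨h0, -, hm, -⟩ := habv
  have h : abv (-x) * abv (-x) = abv x * abv x := by
    rw [← hm, ← hm, neg_mul_neg]
  exact (mul_self_inj (h0 _) (h0 _)).mp h

theorem na_add_eq {K : Type*} [Field K] {abv : K → ℝ} (habv : IsNAAbsValue abv) {x y : K}
    (h : abv y < abv x) : abv (x + y) = abv x := by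
  apply le_antisymm
  · exact (habv.2.2.2 x y).trans (max_le le_rfl h.le)
  · have h1 := habv.2.2.2 (x + y) (-y)
    rw [add_neg_cancel_right, na_neg habv] at h1
    rcases le_max_iff.mp h1 with h2 | h2
    · exact h2
    · exact absurd h2 (not_le.mpr h)

theorem WIdx.mul {K : Type*} [Field K] {abv : K → ℝ} (habv : IsNAAbsValue abv)
    {r : ℝ} (hr : 0 < r) {f g : Polynomial K} {d e : ℕ} {M N : ℝ}
    (hf : WIdx abv r f d M) (hg : WIdx abv r g e N) :
    WIdx abv r (f * g) (d + e) (M * N) := by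
  obtain ⟨hM, f1, f2, f3⟩ := hf
  obtain ⟨hN, g1, g2, g3⟩ := hg
  have hMN := mul_pos hM hN
  have key : ∀ i j, abv (f.coeff i * g.coeff j) * r ^ (i + j) =
      (abv (f.coeff i) * r ^ i) * (abv (g.coeff j) * r ^ j) := fun i j => by
    rw [habv.2.2.1]; ring
  have nn : ∀ (p : Polynomial K) i, 0 ≤ abv (p.coeff i) * r ^ i := fun p i =>
    mul_nonneg (habv.1 _) (pow_pos hr i).le
  have kle : ∀ i j, abv (f.coeff i * g.coeff j) ≤ M * N / r ^ (i + j) := fun i j => by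
    rw [le_div_iff₀ (pow_pos hr _), key]
    exact mul_le_mul (f2 i) (g2 j) (nn g j) hM.le
  have klt : ∀ i j, d < i ∨ e < j → abv (f.coeff i * g.coeff j) < M * N / r ^ (i + j) :=
    fun i j hij => by
    rw [lt_div_iff₀ (pow_pos hr _), key]
    rcases hij with h | h
    · exact (mul_le_mul_of_nonneg_left (g2 j) (nn f i)).trans_lt
        (mul_lt_mul_of_pos_right (f3 i h) hN)
    · exact (mul_le_mul_of_nonneg_right (f2 i) (nn g j)).trans_lt
        (mul_lt_mul_of_pos_left (g3 j h) hM)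
  refine ⟨hMN, ?_, fun n => ?_, fun n hn => ?_⟩
  · have hmem : (d, e) ∈ Finset.HasAntidiagonal.antidiagonal (d + e) := Finset.HasAntidiagonal.mem_antidiagonal.mpr rfl
    rw [Polynomial.coeff_mul, ← Finset.add_sum_erase _ _ hmem, na_add_eq habv, key, f1, g1]
    have hde : abv (f.coeff d * g.coeff e) = M * N / r ^ (d + e) := by
      rw [eq_div_iff (pow_pos hr _).ne', key, f1, g1]
    simp only [hde]
    apply na_sum_lt habv _ _ (div_pos hMN (pow_pos hr _))
    rintro ⟨i, j⟩ hij
    obtain ⟨hne, hij⟩ := Finset.mem_erase.mp hij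
    have hs : i + j = d + e := Finset.HasAntidiagonal.mem_antidiagonal.mp hij
    rw [← hs]
    apply klt
    by_contra hc
    apply hne
    rw [Prod.mk.injEq]
    omega
  · rw [← le_div_iff₀ (pow_pos hr _), Polynomial.coeff_mul]
    apply na_sum_le habv _ _ (div_pos hMN (pow_pos hr _))
    rintro ⟨i, j⟩ hij
    rw [← Finset.HasAntidiagonal.mem_antidiagonal.mp hij]
    exact kle i j
  · rw [← lt_div_iff₀ (pow_pos hr _), Polynomial.coeff_mul]
    apply na_sum_lt habv _ _ (div_pos hMN (pow_pos hr _))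
    rintro ⟨i, j⟩ hij
    have hs : i + j = n := Finset.HasAntidiagonal.mem_antidiagonal.mp hij
    rw [← hs]
    apply klt
    omega

/-- The Weierstrass degree is additive: `wdeg_r (f·g) = wdeg_r f + wdeg_r g` for nonzero
polynomials `f, g` over a field with a nonarchimedean multiplicative absolute value. -/
theorem stmt7 {K : Type*} [Field K] (abv : K → ℝ) (habv : IsNAAbsValue abv)
    (r : ℝ) (hr : 0 < r) (f g : Polynomial K) (hf : f ≠ 0) (hg : g ≠ 0) :
    wdeg abv r (f * g) = wdeg abv r f + wdeg abv r g := by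
  obtain ⟨d, M, h1⟩ := exists_WIdx habv hr hf
  obtain ⟨e, N, h2⟩ := exists_WIdx habv hr hg
  rw [h1.wdeg_eq, h2.wdeg_eq, (WIdx.mul habv hr h1 h2).wdeg_eq]
end

section
/- (Berkovich's classification, seminorm form.) Let K be a complete, algebraically closed field with a nontrivial nonarchimedean multiplicative absolute value |·|, and let ‖·‖ : K[y] → ℝ be a multiplicative nonarchimedean seminorm extending |·|, i.e. ‖f·g‖ = ‖f‖·‖g‖, ‖f+g‖ ≤ max(‖f‖, ‖g‖), and ‖c‖ = |c| for every constant c ∈ K. Then there exist sequences (aₙ)ₙ ⊂ K and (rₙ)ₙ ⊂ [0,∞) with |aₙ₊₁ − aₙ| ≤ rₙ and rₙ₊₁ ≤ rₙ for all n, such that for every polynomial f ∈ K[y], ‖f‖ = infₙ ( maxᵢ |cᵢ(aₙ)| rₙⁱ ), where (cᵢ(aₙ))ᵢ are the Taylor coefficients of f about aₙ (when rₙ = 0 this quantity is |f(aₙ)|). -/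
/-- Ultrametric bound on a finite sum. -/
lemma ultra_sum {A ι : Type*} [AddCommMonoid A] (v : A → ℝ) (h0 : v 0 = 0)
    (hadd : ∀ x y, v (x + y) ≤ max (v x) (v y)) (s : Finset ι) (x : ι → A) (B : ℝ) (hB : 0 ≤ B)
    (h : ∀ i ∈ s, v (x i) ≤ B) : v (∑ i ∈ s, x i) ≤ B := by
  classical
  induction s using Finset.induction_on with
  | empty => simpa [h0] using hB
  | insert a s ha ih =>
    rw [Finset.sum_insert ha]
    exact (hadd _ _).trans (max_le (h a (by simp)) (ih fun i hi => h i (by simp [hi])))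

/-- The Gauss norm. -/
noncomputable def gaussN {K : Type*} [Field K] (abv : K → ℝ) (a : K) (r : ℝ) (f : Polynomial K) : ℝ :=
  ⨆ i : ℕ, abv ((Polynomial.taylor a f).coeff i) * r ^ i

lemma gaussN_bdd {K : Type*} [Field K] (abv : K → ℝ) (h0 : abv 0 = 0) (a : K) (r : ℝ)
    (f : Polynomial K) :
    BddAbove (Set.range fun i : ℕ => abv ((Polynomial.taylor a f).coeff i) * r ^ i) := by
  apply Set.Finite.bddAbove
  refine ((Set.finite_singleton (0:ℝ)).union (((Polynomial.taylor a f).support.finite_toSet).image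
    (fun i : ℕ => abv ((Polynomial.taylor a f).coeff i) * r ^ i))).subset ?_
  rintro _ ⟨i, rfl⟩
  by_cases hi : (Polynomial.taylor a f).coeff i = 0
  · left; simp [hi, h0]
  · right; exact ⟨i, by simpa using hi, rfl⟩

lemma le_gaussN {K : Type*} [Field K] (abv : K → ℝ) (h0 : abv 0 = 0) (a : K) (r : ℝ)
    (f : Polynomial K) (i : ℕ) :
    abv ((Polynomial.taylor a f).coeff i) * r ^ i ≤ gaussN abv a r f :=
  le_ciSup (gaussN_bdd abv h0 a r f) i

lemma gaussN_nonneg {K : Type*} [Field K] (abv : K → ℝ) (hnn : ∀ x, 0 ≤ abv x) (a : K) (r : ℝ)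
    (hr : 0 ≤ r) (f : Polynomial K) : 0 ≤ gaussN abv a r f :=
  Real.iSup_nonneg fun i => mul_nonneg (hnn _) (pow_nonneg hr i)

lemma gaussN_mul {K : Type*} [Field K] (abv : K → ℝ) (habv : IsNAAbsValue abv) (a : K) (r : ℝ)
    (hr : 0 ≤ r) (f g : Polynomial K) :
    gaussN abv a r (f * g) ≤ gaussN abv a r f * gaussN abv a r g := by
  obtain ⟨hnn, hz, hm, had⟩ := habv
  have h0 : abv 0 = 0 := (hz 0).2 rfl
  refine ciSup_le fun i => ?_
  rw [Polynomial.taylor_mul, Polynomial.coeff_mul]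
  refine ultra_sum (fun x => abv x * r ^ i) (by simp [h0]) (fun x y => ?_) _ _ _
    (mul_nonneg (gaussN_nonneg abv hnn a r hr f) (gaussN_nonneg abv hnn a r hr g)) ?_
  · rw [← max_mul_of_nonneg _ _ (pow_nonneg hr i)]
    exact mul_le_mul_of_nonneg_right (had x y) (pow_nonneg hr i)
  · rintro ⟨j, k⟩ hjk
    have hjk : j + k = i := by simpa using hjk
    subst hjk
    simp only [hm]
    calc _ = (abv ((Polynomial.taylor a f).coeff j) * r ^ j) *
          (abv ((Polynomial.taylor a g).coeff k) * r ^ k) := by ring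
      _ ≤ _ := mul_le_mul (le_gaussN abv h0 a r f j) (le_gaussN abv h0 a r g k)
          (mul_nonneg (hnn _) (pow_nonneg hr k)) (gaussN_nonneg abv hnn a r hr f)

/-- Berkovich's classification (seminorm form): over a complete, algebraically closed field
with a nontrivial nonarchimedean multiplicative absolute value, every multiplicative
nonarchimedean seminorm on `K[y]` extending `|·|` is the infimum of Gauss norms along a
nested sequence of closed disks `D̄(aₙ, rₙ)` (with `rₙ ≥ 0`, `|aₙ₊₁ − aₙ| ≤ rₙ`,
`rₙ₊₁ ≤ rₙ`). -/
theorem stmt10 {K : Type*} [Field K] [IsAlgClosed K] (abv : K → ℝ) (habv : IsNAAbsValue abv)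
    (hnontriv : ∃ x : K, abv x ≠ 0 ∧ abv x ≠ 1)
    (hcomplete : ∀ x : ℕ → K,
      (∀ ε : ℝ, 0 < ε → ∃ N : ℕ, ∀ m ≥ N, ∀ n ≥ N, abv (x m - x n) < ε) →
      ∃ l : K, ∀ ε : ℝ, 0 < ε → ∃ N : ℕ, ∀ n ≥ N, abv (x n - l) < ε)
    (nrm : Polynomial K → ℝ)
    (hnn : ∀ f, 0 ≤ nrm f)
    (hmul : ∀ f g, nrm (f * g) = nrm f * nrm g)
    (hadd : ∀ f g, nrm (f + g) ≤ max (nrm f) (nrm g))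
    (hC : ∀ c : K, nrm (Polynomial.C c) = abv c) :
    ∃ (a : ℕ → K) (r : ℕ → ℝ), (∀ n, 0 ≤ r n) ∧
      (∀ n, abv (a (n + 1) - a n) ≤ r n) ∧ (∀ n, r (n + 1) ≤ r n) ∧
      ∀ f : Polynomial K,
        nrm f = ⨅ n : ℕ, ⨆ i : ℕ, abv ((Polynomial.taylor (a n) f).coeff i) * r n ^ i := by

  classical
  obtain ⟨hann, haz, ham, haadd⟩ := id habv
  have h0 : abv 0 = 0 := (haz 0).2 rfl
  have hn0 : nrm 0 = 0 := by simpa [h0] using hC 0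
  have h1 : abv 1 = 1 := by
    have h := ham 1 1
    have h' : abv 1 ≠ 0 := fun h => one_ne_zero ((haz 1).1 h)
    rw [mul_one] at h
    exact (mul_right_cancel₀ h' (by rw [one_mul]; exact h)).symm
  have hn1 : nrm 1 = 1 := by simpa [h1] using hC 1
  have hneg1 : nrm (-1) = 1 := by
    have h := hmul (-1) (-1)
    rw [neg_one_mul, neg_neg, hn1] at h
    nlinarith [hnn (-1)]
  have hneg : ∀ f, nrm (-f) = nrm f := fun f => by
    rw [← neg_one_mul, hmul, hneg1, one_mul]
  have hpow : ∀ f (i : ℕ), nrm (f ^ i) = nrm f ^ i := fun f i => by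
    induction i with
    | zero => simp [hn1]
    | succ i ih => rw [pow_succ, hmul, ih, pow_succ]
  set ρ : K → ℝ := fun a => nrm (Polynomial.X - Polynomial.C a) with hρ
  have hdist : ∀ a b, abv (a - b) ≤ max (ρ a) (ρ b) := fun a b => by
    rw [← hC, Polynomial.C_sub]
    have := hadd (-(Polynomial.X - Polynomial.C a)) (Polynomial.X - Polynomial.C b)
    rw [hneg] at this
    convert this using 2
    ring
  have hbdd : BddBelow (Set.range ρ) := ⟨0, by rintro _ ⟨a, rfl⟩; exact hnn _⟩
  obtain ⟨r, hanti, htend, hmem⟩ := exists_seq_tendsto_sInf (Set.range_nonempty ρ) hbdd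
  choose a ha using hmem
  have hr : ∀ n, 0 ≤ r n := fun n => by rw [← ha]; exact hnn _
  refine ⟨a, r, hr, fun n => ?_, fun n => hanti (Nat.le_succ n), fun f => ?_⟩
  · refine (hdist _ _).trans (max_le ?_ (ha n).le)
    rw [ha]; exact hanti (Nat.le_succ n)
  change nrm f = ⨅ n : ℕ, gaussN abv (a n) (r n) f
  have hle : ∀ f n, nrm f ≤ gaussN abv (a n) (r n) f := fun f n => by
    conv_lhs => rw [← Polynomial.sum_taylor_eq f (a n)]
    refine ultra_sum nrm hn0 hadd _ _ _ (gaussN_nonneg abv hann _ _ (hr n) f) fun i _ => ?_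
    rw [hmul, hC, hpow]
    change _ * ρ (a n) ^ i ≤ _
    rw [ha]
    exact le_gaussN abv h0 _ _ f i
  have hlin : ∀ b, Filter.Tendsto (fun n => gaussN abv (a n) (r n) (Polynomial.X - Polynomial.C b))
      Filter.atTop (nhds (ρ b)) := fun b => by
    have hb : sInf (Set.range ρ) ≤ ρ b := csInf_le hbdd ⟨b, rfl⟩
    have ht : Filter.Tendsto (fun n => max (r n) (ρ b)) Filter.atTop (nhds (ρ b)) := by
      simpa [max_eq_right hb] using htend.max (tendsto_const_nhds (x := ρ b))
    refine tendsto_of_tendsto_of_tendsto_of_le_of_le tendsto_const_nhds ht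
      (fun n => hle _ n) (fun n => ?_)
    refine ciSup_le fun i => ?_
    have hnnm : 0 ≤ max (r n) (ρ b) := (hr n).trans (le_max_left _ _)
    have e : Polynomial.taylor (a n) (Polynomial.X - Polynomial.C b)
        = Polynomial.X + Polynomial.C (a n - b) := by
      simp [Polynomial.taylor_X, Polynomial.taylor_C]; ring
    rw [e]
    match i with
    | 0 => simpa [ha] using hdist (a n) b
    | 1 => simp [Polynomial.coeff_C, h1]
    | (k+2) => simp [Polynomial.coeff_C, Polynomial.coeff_X, h0, hr]
  have hmulT : ∀ f g, Filter.Tendsto (fun n => gaussN abv (a n) (r n) f) Filter.atTop (nhds (nrm f))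
      → Filter.Tendsto (fun n => gaussN abv (a n) (r n) g) Filter.atTop (nhds (nrm g))
      → Filter.Tendsto (fun n => gaussN abv (a n) (r n) (f * g)) Filter.atTop
        (nhds (nrm (f * g))) := fun f g hf hg => by
    refine tendsto_of_tendsto_of_tendsto_of_le_of_le tendsto_const_nhds
      (by rw [hmul]; exact hf.mul hg)
      (fun n => hle _ n) (fun n => gaussN_mul abv habv _ _ (hr n) f g)
  have hconst : ∀ c, Filter.Tendsto (fun n => gaussN abv (a n) (r n) (Polynomial.C c)) Filter.atTop
      (nhds (nrm (Polynomial.C c))) := fun c => by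
    refine tendsto_of_tendsto_of_tendsto_of_le_of_le tendsto_const_nhds tendsto_const_nhds
      (fun n => hle _ n) (fun n => ciSup_le fun i => ?_)
    rw [Polynomial.taylor_C, hC]
    match i with
    | 0 => simp
    | (k+1) => simp [Polynomial.coeff_C, h0, hann]
  have hprod : ∀ s : Multiset K, Filter.Tendsto (fun n => gaussN abv (a n) (r n)
      (s.map fun b => Polynomial.X - Polynomial.C b).prod) Filter.atTop
      (nhds (nrm (s.map fun b => Polynomial.X - Polynomial.C b).prod)) := fun s => by
    induction s using Multiset.induction_on with
    | empty => simpa using hconst 1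
    | cons b s ih =>
      rw [Multiset.map_cons, Multiset.prod_cons]
      exact hmulT _ _ (hlin b) ih
  have hf : Filter.Tendsto (fun n => gaussN abv (a n) (r n) f) Filter.atTop (nhds (nrm f)) := by
    have := hmulT _ _ (hconst f.leadingCoeff) (hprod f.roots)
    rwa [← (IsAlgClosed.splits f).eq_prod_roots] at this
  refine le_antisymm (le_ciInf fun n => hle f n) (ge_of_tendsto' hf fun n => ?_)
  exact ciInf_le ⟨nrm f, by rintro _ ⟨n, rfl⟩; exact hle f n⟩ n
end

section
/- Let X be an ultrametric space (its metric d satisfies d(x,z) ≤ max(d(x,y), d(y,z)) for all x,y,z), let φ : X → X be an isometry (d(φ(x),φ(y)) = d(x,y) for all x,y), let b ∈ X, and let j ≥ 1 be an integer. Set t := d(φ^j(b), b), and suppose d(φ^n(b), b) ≥ t for every integer n ≥ 1. Then d(φ^{jm}(b), φ^{jn}(b)) = t for all integers m > n ≥ 0; in particular, if t > 0 the points φ^{jn}(b), n ≥ 0, are pairwise at distance exactly t, so infinitely many of them lie in pairwise distinct open balls of radius t. -/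
/-- In an ultrametric space, if `φ` is an isometry, `t = d(φ^j(b), b)` and
`d(φ^n(b), b) ≥ t` for all `n ≥ 1`, then the points `φ^{jn}(b)` are pairwise at distance
exactly `t`; in particular, when `t > 0` they lie in pairwise distinct open balls of
radius `t`. -/
theorem stmt11 {X : Type*} [MetricSpace X]
    (hultra : ∀ x y z : X, dist x z ≤ max (dist x y) (dist y z))
    (φ : X → X) (hiso : ∀ x y : X, dist (φ x) (φ y) = dist x y)
    (b : X) (j : ℕ) (hj : 1 ≤ j) (t : ℝ) (ht : t = dist (φ^[j] b) b)
    (hmin : ∀ n : ℕ, 1 ≤ n → t ≤ dist (φ^[n] b) b) :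
    (∀ m n : ℕ, n < m → dist (φ^[j * m] b) (φ^[j * n] b) = t) ∧
    (0 < t → ∀ m n : ℕ, m ≠ n → φ^[j * m] b ∉ Metric.ball (φ^[j * n] b) t) := by
  have hit : ∀ (k : ℕ) (x y : X), dist (φ^[k] x) (φ^[k] y) = dist x y := by
    intro k
    induction k with
    | zero => intro x y; rfl
    | succ k ih =>
      intro x y
      rw [Function.iterate_succ_apply, Function.iterate_succ_apply, ih, hiso]
  have ht0 : 0 ≤ t := ht ▸ dist_nonneg
  have hle : ∀ k : ℕ, dist (φ^[j * k] b) b ≤ t := by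
    intro k
    induction k with
    | zero => simpa using ht0
    | succ k ih =>
      refine (hultra _ (φ^[j * k] b) _).trans (max_le ?_ ih)
      rw [Nat.mul_succ, Function.iterate_add_apply, hit, ht]
  have main : ∀ m n : ℕ, n < m → dist (φ^[j * m] b) (φ^[j * n] b) = t := by
    intro m n hmn
    obtain ⟨k, rfl⟩ := Nat.exists_eq_add_of_lt hmn
    have e : j * (n + k + 1) = j * n + j * (k + 1) := by ring
    rw [e, Function.iterate_add_apply, hit]
    exact le_antisymm (hle _) (hmin _ (Nat.mul_pos hj k.succ_pos))
  refine ⟨main, fun _ m n hmn hmem => ?_⟩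
  rw [Metric.mem_ball] at hmem
  rcases lt_or_gt_of_ne hmn with h | h
  · rw [dist_comm, main n m h] at hmem
    exact lt_irrefl _ hmem
  · rw [main m n h] at hmem
    exact lt_irrefl _ hmem
end

section
/- Let K be a complete, algebraically closed field with a nonarchimedean multiplicative absolute value |·|, let q ≥ 1 be real, and let σ : K → K be a ring automorphism with |σ(a)| = |a|^{1/q} for all a ∈ K. Let a ∈ K, r > 0, and let (cₙ)ₙ ⊂ K satisfy |cₙ| rⁿ → 0, so that f(b) := Σₙ cₙ (b−a)ⁿ converges for every b in the closed disk D̄(a,r); define φ(b) := σ⁻¹(f(b)) for b ∈ D̄(a,r). If the image φ(D̄(a,r)) is a proper subset of D̄(a,r), then φ has a unique fixed point z in D̄(a,r), and moreover the iterates φⁿ(b) converge to z for every b ∈ D̄(a,r). -/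
lemma aux_sub {K : Type*} [NormedField K] [IsUltrametricDist K] (x y : K) :
    ‖x - y‖ ≤ max ‖x‖ ‖y‖ := by
  have := IsUltrametricDist.norm_add_le_max x (-y)
  rwa [norm_neg, ← sub_eq_add_neg] at this

open Polynomial in
lemma aux_roots {K : Type*} [NormedField K] [IsUltrametricDist K] (t : ℝ) (ht : 0 ≤ t) (l : K)
    (hl : l ≠ 0) (s : Multiset K) :
    (∀ ρ ∈ s, t < ‖ρ‖) → ∀ n, 1 ≤ n →
      ‖(C l * (s.map fun ρ => X - C ρ).prod).coeff n‖ * t ^ n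
        < ‖(C l * (s.map fun ρ => X - C ρ).prod).coeff 0‖ := by
  induction s using Multiset.induction_on with
  | empty =>
    intro _ n hn
    simp [coeff_C, hl, show n ≠ 0 by omega]
  | cons ρ s ih =>
    intro h n hn
    have ih' := ih (fun x hx => h x (Multiset.mem_cons_of_mem hx))
    have hρ := h ρ (Multiset.mem_cons_self _ _)
    have e : C l * ((ρ ::ₘ s).map fun ρ => X - C ρ).prod
        = (X - C ρ) * (C l * (s.map fun ρ => X - C ρ).prod) := by
      rw [Multiset.map_cons, Multiset.prod_cons]; ring
    rw [e]
    set Q := C l * (s.map fun ρ => X - C ρ).prod with hQ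
    have hρ0 : 0 < ‖ρ‖ := lt_of_le_of_lt ht hρ
    have hQ0 : 0 < ‖Q.coeff 0‖ := lt_of_le_of_lt (by positivity) (ih' 1 le_rfl)
    obtain ⟨k, rfl⟩ : ∃ k, n = k + 1 := ⟨n - 1, by omega⟩
    have h1 : ((X - C ρ) * Q).coeff (k + 1) = Q.coeff k - ρ * Q.coeff (k + 1) := by
      simp [sub_mul]
    have h0 : ((X - C ρ) * Q).coeff 0 = - (ρ * Q.coeff 0) := by
      simp [sub_mul]
    rw [h1, h0, norm_neg, norm_mul]
    have hk : ‖Q.coeff k‖ * t ^ k ≤ ‖Q.coeff 0‖ := by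
      rcases Nat.eq_zero_or_pos k with rfl | hk
      · simp
      · exact (ih' k hk).le
    have hA : ‖Q.coeff k‖ * t ^ (k + 1) < ‖ρ‖ * ‖Q.coeff 0‖ := by
      calc ‖Q.coeff k‖ * t ^ (k + 1) = t * (‖Q.coeff k‖ * t ^ k) := by ring
        _ ≤ t * ‖Q.coeff 0‖ := by gcongr
        _ < _ := by gcongr
    have hB : ‖ρ * Q.coeff (k+1)‖ * t ^ (k + 1) < ‖ρ‖ * ‖Q.coeff 0‖ := by
      rw [norm_mul, mul_assoc]
      exact mul_lt_mul_of_pos_left (ih' _ hn) hρ0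
    have := aux_sub (Q.coeff k) (ρ * Q.coeff (k+1))
    rcases le_max_iff.1 this with h | h
    · exact lt_of_le_of_lt (by gcongr) hA
    · exact lt_of_le_of_lt (by gcongr) hB

lemma aux_root_exists {K : Type*} [NormedField K] [IsUltrametricDist K] [IsAlgClosed K]
    (P : Polynomial K) (N : ℕ) (hN : 1 ≤ N) (hP : P.coeff N ≠ 0) :
    ∃ ρ, P.eval ρ = 0 ∧ ‖P.coeff N‖ * ‖ρ‖ ^ N ≤ ‖P.coeff 0‖ := by
  have hP0 : P ≠ 0 := by rintro rfl; simp at hP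
  by_contra! hcon
  obtain ⟨t, ht, htN⟩ : ∃ t : ℝ, 0 ≤ t ∧ t ^ N = ‖P.coeff 0‖ / ‖P.coeff N‖ :=
    ⟨(‖P.coeff 0‖ / ‖P.coeff N‖) ^ (1 / (N:ℝ)), by positivity, by
      rw [one_div]; exact Real.rpow_inv_natCast_pow (by positivity) (by omega)⟩
  have hpos : 0 < ‖P.coeff N‖ := norm_pos_iff.2 hP
  have key := aux_roots t ht P.leadingCoeff (by simpa using hP0) P.roots (by
    intro ρ hρ
    have h1 := hcon ρ ((Polynomial.mem_roots hP0).1 hρ)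
    by_contra! h2
    have : ‖ρ‖ ^ N ≤ t ^ N := by gcongr
    rw [htN, le_div_iff₀ hpos] at this
    linarith) N hN
  rw [← (IsAlgClosed.splits P).eq_prod_roots, htN, mul_div_cancel₀ _ hpos.ne'] at key
  exact lt_irrefl _ key

lemma aux_sum_lt {K : Type*} [NormedField K] [IsUltrametricDist K] (B : ℝ) (hB : 0 < B)
    (e : ℕ → K) (s : Finset ℕ) (h : ∀ n ∈ s, ‖e n‖ < B) : ‖∑ n ∈ s, e n‖ < B := by
  induction s using Finset.induction_on with
  | empty => simpa
  | insert x s hx ih =>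
    rw [Finset.sum_insert hx]
    exact lt_of_le_of_lt (IsUltrametricDist.norm_add_le_max _ _)
      (max_lt (h _ (by simp)) (ih fun n hn => h n (by simp [hn])))

lemma aux_step {K : Type*} [NormedField K] [IsUltrametricDist K] [IsAlgClosed K]
    (c : ℕ → K) (r : ℝ) (hr : 0 < r) (N : ℕ) (hN : 1 ≤ N) (hcN : c N ≠ 0)
    (hmax : ∀ n, N < n → ‖c n‖ * r ^ n < ‖c N‖ * r ^ N) (M : ℕ) (hM : N < M)
    (x : K) (hx : ‖x‖ ≤ r) (hPx : ‖∑ n ∈ Finset.range M, c n * x ^ n‖ ≤ ‖c N‖ * r ^ N) :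
    ∃ y, ‖y‖ ≤ r ∧ ∑ n ∈ Finset.range M, c n * y ^ n = 0 ∧
      ‖c N‖ * ‖y - x‖ ^ N ≤ ‖∑ n ∈ Finset.range M, c n * x ^ n‖ := by
  classical
  have hpos : 0 < ‖c N‖ := norm_pos_iff.2 hcN
  set P : Polynomial K := ∑ n ∈ Finset.range M, Polynomial.monomial n (c n) with hPdef
  have hev : ∀ y, P.eval y = ∑ n ∈ Finset.range M, c n * y ^ n := by
    intro y; simp [hPdef, Polynomial.eval_finsetSum]
  set Q := Polynomial.taylor x P with hQ
  have hQ0 : Q.coeff 0 = ∑ n ∈ Finset.range M, c n * x ^ n := by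
    rw [hQ, Polynomial.taylor_coeff_zero, hev]
  have hQN : Q.coeff N = ∑ n ∈ Finset.range M, (n.choose N : K) * c n * x ^ (n - N) := by
    rw [hQ, Polynomial.taylor_coeff, hPdef, map_sum, Polynomial.eval_finsetSum]
    simp [Polynomial.hasseDeriv_monomial]
  have hle : ‖c N‖ ≤ ‖Q.coeff N‖ := by
    rw [← Finset.add_sum_erase _ _ (Finset.mem_range.2 hM)] at hQN
    have hlt := aux_sum_lt ‖c N‖ hpos (fun n => (n.choose N : K) * c n * x ^ (n - N))
      ((Finset.range M).erase N) (by
        intro n hn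
        have hne := (Finset.mem_erase.1 hn).1
        rcases lt_or_gt_of_ne hne with h | h
        · simp [Nat.choose_eq_zero_of_lt h, hcN]
        · have h1 := hmax n h
          have h2 : ‖(n.choose N : K)‖ ≤ 1 := IsUltrametricDist.norm_natCast_le_one K _
          have h3 : r ^ n = r ^ (n - N) * r ^ N := by rw [← pow_add]; congr 1; omega
          rw [h3, ← mul_assoc] at h1
          have h4 := lt_of_mul_lt_mul_right h1 (by positivity)
          rw [norm_mul, norm_mul, norm_pow]
          calc _ ≤ 1 * ‖c n‖ * r ^ (n - N) := by gcongr
            _ < _ := by rwa [one_mul])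
    simp only [Nat.choose_self, Nat.cast_one, one_mul, Nat.sub_self, pow_zero, mul_one] at hQN
    have h5 : c N = Q.coeff N -
      ∑ n ∈ (Finset.range M).erase N, (n.choose N : K) * c n * x ^ (n - N) := by
      rw [hQN]; ring
    have h6 := aux_sub (Q.coeff N)
      (∑ n ∈ (Finset.range M).erase N, (n.choose N : K) * c n * x ^ (n - N))
    rw [← h5] at h6
    rcases le_max_iff.1 h6 with h | h
    · exact h
    · exact absurd hlt (not_lt.2 h)
  obtain ⟨ρ, hρ, hρ2⟩ := aux_root_exists Q N hN (norm_pos_iff.1 (hpos.trans_le hle))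
  rw [hQ0] at hρ2
  have hρ3 : ‖c N‖ * ‖ρ‖ ^ N ≤ ‖∑ n ∈ Finset.range M, c n * x ^ n‖ :=
    le_trans (by gcongr) hρ2
  refine ⟨ρ + x, ?_, ?_, by simpa using hρ3⟩
  · have h7 : ‖ρ‖ ^ N ≤ r ^ N := le_of_mul_le_mul_left (hρ3.trans hPx) hpos
    have h8 : ‖ρ‖ ≤ r := le_of_pow_le_pow_left₀ (by omega) hr.le h7
    exact (IsUltrametricDist.norm_add_le_max _ _).trans (max_le h8 hx)
  · rw [← hev, ← hρ, hQ, Polynomial.taylor_eval]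

lemma aux_pow {K : Type*} [NormedField K] [IsUltrametricDist K] (r : ℝ) (hr : 0 < r)
    (u v : K) (hu : ‖u‖ ≤ r) (hv : ‖v‖ ≤ r) (n : ℕ) :
    ‖u ^ n - v ^ n‖ ≤ ‖u - v‖ / r * r ^ n := by
  induction n with
  | zero => simp; positivity
  | succ n ih =>
    have e : u ^ (n+1) - v ^ (n+1) = u * (u ^ n - v ^ n) + (u - v) * v ^ n := by ring
    rw [e]
    refine (IsUltrametricDist.norm_add_le_max _ _).trans (max_le ?_ ?_)
    · rw [norm_mul]
      calc _ ≤ r * (‖u - v‖ / r * r ^ n) := by gcongr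
        _ = _ := by ring
    · rw [norm_mul, norm_pow]
      calc _ ≤ ‖u - v‖ * r ^ n := by gcongr
        _ = _ := by field_simp; ring

lemma aux_lip {K : Type*} [NormedField K] [IsUltrametricDist K] (r : ℝ) (hr : 0 < r)
    (c : ℕ → K) (s : ℝ) (hs0 : 0 ≤ s) (hs : ∀ n, 1 ≤ n → ‖c n‖ * r ^ n ≤ s)
    (u v : K) (hu : ‖u‖ ≤ r) (hv : ‖v‖ ≤ r) (M : ℕ) :
    ‖∑ n ∈ Finset.range M, c n * u ^ n - ∑ n ∈ Finset.range M, c n * v ^ n‖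
      ≤ s * (‖u - v‖ / r) := by
  rw [← Finset.sum_sub_distrib]
  apply IsUltrametricDist.norm_sum_le_of_forall_le_of_nonneg (by positivity)
  intro n _
  rcases Nat.eq_zero_or_pos n with rfl | hn
  · simp; positivity
  rw [← mul_sub, norm_mul]
  calc _ ≤ ‖c n‖ * (‖u - v‖ / r * r ^ n) := by gcongr; exact aux_pow r hr u v hu hv n
    _ = (‖c n‖ * r ^ n) * (‖u - v‖ / r) := by ring
    _ ≤ _ := by gcongr; exact hs n hn

lemma aux_summable {K : Type*} [NormedField K] [CompleteSpace K] [IsUltrametricDist K]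
    (r : ℝ) (c : ℕ → K)
    (hc : Filter.Tendsto (fun n => ‖c n‖ * r ^ n) Filter.atTop (nhds 0)) (u : K) (hu : ‖u‖ ≤ r) :
    Summable fun n => c n * u ^ n := by
  apply NonarchimedeanAddGroup.summable_of_tendsto_cofinite_zero
  rw [Nat.cofinite_eq_atTop]
  apply squeeze_zero_norm _ hc
  intro n
  rw [norm_mul, norm_pow]
  gcongr

lemma aux_zero {K : Type*} [NormedField K] [CompleteSpace K] [IsUltrametricDist K] [IsAlgClosed K]
    (c : ℕ → K) (r : ℝ) (hr : 0 < r)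
    (hc : Filter.Tendsto (fun n => ‖c n‖ * r ^ n) Filter.atTop (nhds 0))
    (N : ℕ) (hN : 1 ≤ N) (hcN : c N ≠ 0)
    (hmax : ∀ n, N < n → ‖c n‖ * r ^ n < ‖c N‖ * r ^ N)
    (hmax' : ∀ n, ‖c n‖ * r ^ n ≤ ‖c N‖ * r ^ N) :
    ∃ x, ‖x‖ ≤ r ∧ ∑' n, c n * x ^ n = 0 := by
  have hpos : 0 < ‖c N‖ := norm_pos_iff.2 hcN
  let S (k : ℕ) := {x : K // ‖x‖ ≤ r ∧ ∑ n ∈ Finset.range (N + 1 + k), c n * x ^ n = 0}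
  have h0 : Nonempty (S 0) := by
    obtain ⟨y, h1, h2, _⟩ := aux_step c r hr N hN hcN hmax (N+1) (by omega) 0 (by simpa using hr.le)
      (by rw [Finset.sum_range_succ']; simpa using hmax' 0)
    exact ⟨⟨y, h1, h2⟩⟩
  have hstep : ∀ k (x : S k), ∃ y : S (k+1),
      ‖c N‖ * ‖y.1 - x.1‖ ^ N ≤ ‖c (N+1+k)‖ * r ^ (N+1+k) := by
    intro k x
    have hb : ‖∑ n ∈ Finset.range (N+1+k+1), c n * x.1 ^ n‖ ≤ ‖c (N+1+k)‖ * r ^ (N+1+k) := by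
      rw [Finset.sum_range_succ, x.2.2, zero_add, norm_mul, norm_pow]
      have := x.2.1
      gcongr
    obtain ⟨y, h1, h2, h3⟩ := aux_step c r hr N hN hcN hmax (N+1+k+1) (by omega) x.1 x.2.1
      (hb.trans (hmax' _))
    exact ⟨⟨y, h1, h2⟩, h3.trans hb⟩
  choose g hg using hstep
  let X : ∀ k, S k := fun k => Nat.rec h0.some (fun k x => g k x) k
  let x : ℕ → K := fun k => (X k).1
  have hx : ∀ k, ‖c N‖ * ‖x (k+1) - x k‖ ^ N ≤ ‖c (N+1+k)‖ * r ^ (N+1+k) := fun k => hg k (X k)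
  have hdiff : Filter.Tendsto (fun k => x (k+1) - x k) Filter.atTop (nhds 0) := by
    have ht : Filter.Tendsto (fun k => ‖x (k+1) - x k‖ ^ N) Filter.atTop (nhds 0) := by
      have h1 : Filter.Tendsto (fun k => ‖c (N+1+k)‖ * r ^ (N+1+k) / ‖c N‖)
          Filter.atTop (nhds 0) := by
        have := (hc.comp (Filter.tendsto_add_atTop_nat (N+1))).div_const ‖c N‖
        rw [zero_div] at this
        refine this.congr fun k => ?_
        simp only [Function.comp, add_comm k]
      refine squeeze_zero (fun k => by positivity) (fun k => ?_) h1
      rw [le_div_iff₀ hpos, mul_comm]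
      exact hx k
    rw [tendsto_zero_iff_norm_tendsto_zero]
    rw [Metric.tendsto_atTop] at ht ⊢
    intro ε hε
    obtain ⟨k0, hk0⟩ := ht (ε ^ N) (by positivity)
    refine ⟨k0, fun k hk => ?_⟩
    have := hk0 k hk
    simp only [dist_zero_right, norm_pow, norm_norm] at this ⊢
    exact lt_of_pow_lt_pow_left₀ N hε.le this
  have hsum : Summable fun k => x (k+1) - x k := by
    apply NonarchimedeanAddGroup.summable_of_tendsto_cofinite_zero
    rwa [Nat.cofinite_eq_atTop]
  obtain ⟨z, hz⟩ : ∃ z, Filter.Tendsto x Filter.atTop (nhds z) := by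
    refine ⟨(∑' k, (x (k+1) - x k)) + x 0, ?_⟩
    have := hsum.hasSum.tendsto_sum_nat.add_const (x 0)
    refine this.congr fun k => ?_
    rw [Finset.sum_range_sub]; ring
  have hzr : ‖z‖ ≤ r := le_of_tendsto hz.norm (Filter.Eventually.of_forall fun k => (X k).2.1)
  refine ⟨z, hzr, ?_⟩
  have hA := (aux_summable r c hc z hzr).hasSum.tendsto_sum_nat.comp
    (Filter.tendsto_add_atTop_nat (N+1))
  refine tendsto_nhds_unique hA ?_
  have hB : Filter.Tendsto (fun k => ‖c N‖ * r ^ N * (‖z - x k‖ / r)) Filter.atTop (nhds 0) := by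
    have := ((hz.const_sub z).norm.div_const r).const_mul (‖c N‖ * r ^ N)
    simpa using this
  refine squeeze_zero_norm (fun k => ?_) hB
  have := aux_lip r hr c (‖c N‖ * r ^ N) (by positivity) (fun n _ => hmax' n) z (x k) hzr
    (X k).2.1 (N+1+k)
  rw [(X k).2.2, sub_zero] at this
  simpa [Function.comp, add_comm k] using this

lemma aux_max {K : Type*} [NormedField K] (c : ℕ → K) (r : ℝ) (hr : 0 < r)
    (hc : Filter.Tendsto (fun n => ‖c n‖ * r ^ n) Filter.atTop (nhds 0))
    (m : ℕ) (hm : 1 ≤ m) (hcm : c m ≠ 0) :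
    ∃ N, 1 ≤ N ∧ c N ≠ 0 ∧ (∀ n, N < n → ‖c n‖ * r ^ n < ‖c N‖ * r ^ N) ∧
      ∀ n, 1 ≤ n → ‖c n‖ * r ^ n ≤ ‖c N‖ * r ^ N := by
  have hmpos : 0 < ‖c m‖ * r ^ m := by have := norm_pos_iff.2 hcm; positivity
  obtain ⟨L, hL⟩ := Filter.eventually_atTop.1 (hc.eventually (gt_mem_nhds hmpos))
  have hmL : m < L := by
    by_contra! h
    exact lt_irrefl _ (hL m h)
  obtain ⟨N, hN, hNm⟩ := Finset.exists_max_image (Finset.Ico 1 L)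
    (fun n => toLex (‖c n‖ * r ^ n, n)) ⟨m, by simp [hm, hmL]⟩
  simp only [Finset.mem_Ico, Prod.Lex.toLex_le_toLex] at hN hNm
  have hmN : ‖c m‖ * r ^ m ≤ ‖c N‖ * r ^ N := by
    rcases hNm m ⟨hm, hmL⟩ with h | h
    · exact h.le
    · exact h.1.le
  refine ⟨N, hN.1, ?_, ?_, ?_⟩
  · intro h
    rw [h] at hmN
    rw [norm_zero, zero_mul] at hmN
    linarith
  · intro n hn
    by_cases h : n < L
    · rcases hNm n ⟨by omega, h⟩ with h | h
      · exact h
      · exact absurd h.2 (by omega)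
    · exact (hL n (by omega)).trans_le hmN
  · intro n hn
    by_cases h : n < L
    · rcases hNm n ⟨by omega, h⟩ with h | h
      · exact h.le
      · exact h.1.le
    · exact (hL n (by omega)).le.trans hmN

/-- Attracting fixed points of a skew product with scale factor `q ≥ 1` on a closed disk:
if `σ` is an automorphism of a complete algebraically closed nonarchimedean field with
`‖σ a‖ = ‖a‖^(1/q)`, `f` is a power series converging on the closed disk `D̄(a,r)`, and
`φ = σ⁻¹ ∘ f` maps `D̄(a,r)` to a proper subset of itself, then `φ` has a unique fixed
point `z` in `D̄(a,r)` and the iterates of every point of `D̄(a,r)` converge to `z`. -/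
theorem stmt14 {K : Type*} [NormedField K] [CompleteSpace K] [IsUltrametricDist K]
    [IsAlgClosed K]
    (q : ℝ) (hq : 1 ≤ q) (σ : K ≃+* K) (hσ : ∀ a : K, ‖σ a‖ = ‖a‖ ^ (1 / q))
    (a : K) (r : ℝ) (hr : 0 < r) (c : ℕ → K)
    (hc : Filter.Tendsto (fun n => ‖c n‖ * r ^ n) Filter.atTop (nhds 0)) :
    let φ : K → K := fun b => σ.symm (∑' n : ℕ, c n * (b - a) ^ n)
    φ '' Metric.closedBall a r ⊂ Metric.closedBall a r →
    ∃ z ∈ Metric.closedBall a r, φ z = z ∧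
      (∀ w ∈ Metric.closedBall a r, φ w = w → w = z) ∧
      ∀ b ∈ Metric.closedBall a r,
        Filter.Tendsto (fun n => φ^[n] b) Filter.atTop (nhds z) := by
  intro φ hφ
  have hq0 : 0 < q := by linarith
  have hσs : ∀ y, ‖σ.symm y‖ = ‖y‖ ^ q := by
    intro y
    have := hσ (σ.symm y)
    rw [RingEquiv.apply_symm_apply] at this
    rw [this, ← Real.rpow_mul (norm_nonneg _), one_div, inv_mul_cancel₀ hq0.ne', Real.rpow_one]
  have hmem : ∀ b, b ∈ Metric.closedBall a r ↔ ‖b - a‖ ≤ r := fun b => by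
    rw [Metric.mem_closedBall, dist_eq_norm]
  -- the bound
  obtain ⟨s, hs0, hs, hsr⟩ : ∃ s : ℝ, 0 ≤ s ∧ (∀ n, 1 ≤ n → ‖c n‖ * r ^ n ≤ s) ∧ s ^ q < r := by
    by_cases hall : ∀ n, 1 ≤ n → c n = 0
    · refine ⟨0, le_rfl, fun n hn => by simp [hall n hn], ?_⟩
      rwa [Real.zero_rpow hq0.ne']
    push Not at hall
    obtain ⟨m, hm, hcm⟩ := hall
    obtain ⟨N, hN, hcN, hlt, hle⟩ := aux_max c r hr hc m hm hcm
    refine ⟨‖c N‖ * r ^ N, by positivity, hle, ?_⟩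
    by_contra! hcon
    apply hφ.2
    intro y hy
    have hya : φ a ∈ Metric.closedBall a r := hφ.1 ⟨a, by simp [hr.le], rfl⟩
    have hfa : φ a = σ.symm (c 0) := by
      simp only [φ, sub_self]
      rw [tsum_eq_single 0 (fun n hn => by simp [hn])]
      simp
    have h1 : ‖y - φ a‖ ≤ r := by
      rw [hmem] at hy hya
      have := aux_sub (y - a) (φ a - a)
      rw [sub_sub_sub_cancel_right] at this
      exact this.trans (max_le hy hya)
    have h2 : ‖c 0 - σ y‖ ≤ ‖c N‖ * r ^ N := by
      have h3 : ‖c 0 - σ y‖ = ‖y - φ a‖ ^ (1/q) := by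
        rw [← hσ, hfa, map_sub, RingEquiv.apply_symm_apply, norm_sub_rev]
      rw [h3]
      calc _ ≤ ((‖c N‖ * r ^ N) ^ q) ^ (1/q) := by
            gcongr; exact h1.trans hcon
        _ = _ := by
          rw [← Real.rpow_mul (by positivity), mul_one_div_cancel hq0.ne', Real.rpow_one]
    let c' : ℕ → K := Function.update c 0 (c 0 - σ y)
    have hc' : ∀ n, 1 ≤ n → c' n = c n := fun n hn =>
      Function.update_of_ne (by omega) _ _
    have hc'0 : c' 0 = c 0 - σ y := Function.update_self _ _ _
    obtain ⟨x, hx, hx0⟩ := aux_zero c' r hr (hc.congr' (by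
        filter_upwards [Filter.eventually_ge_atTop 1] with n hn
        rw [hc' n hn])) N hN (by rwa [hc' N hN])
        (fun n hn => by rw [hc' n (by omega), hc' N hN]; exact hlt n hn)
        (fun n => by
          rw [hc' N hN]
          rcases Nat.eq_zero_or_pos n with rfl | hn
          · simpa [hc'0] using h2
          · rw [hc' n hn]; exact hle n hn)
    have hsm := aux_summable r c hc x hx
    have hsm' : Summable fun n => c' n * x ^ n := by
      rw [← summable_nat_add_iff 1] at hsm ⊢
      refine hsm.congr fun n => ?_
      rw [hc' (n+1) (by omega)]
    refine ⟨a + x, by rw [hmem]; simpa using hx, ?_⟩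
    simp only [φ, add_sub_cancel_left]
    rw [RingEquiv.symm_apply_eq]
    rw [hsm'.tsum_eq_zero_add] at hx0
    rw [hsm.tsum_eq_zero_add]
    have : ∀ n, c' (n+1) * x ^ (n+1) = c (n+1) * x ^ (n+1) := fun n => by
      rw [hc' (n+1) (by omega)]
    simp only [this, hc'0, pow_zero, mul_one] at hx0 ⊢
    linear_combination hx0
  -- contraction
  have hcontr : ∀ u ∈ Metric.closedBall a r, ∀ v ∈ Metric.closedBall a r,
      ‖φ u - φ v‖ ≤ s ^ q / r * ‖u - v‖ := by
    intro u hu v hv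
    rw [hmem] at hu hv
    have h1 : ‖∑' n, c n * (u - a) ^ n - ∑' n, c n * (v - a) ^ n‖ ≤ s * (‖u - v‖ / r) := by
      have ht := ((aux_summable r c hc _ hu).hasSum.tendsto_sum_nat.sub
        (aux_summable r c hc _ hv).hasSum.tendsto_sum_nat).norm
      refine le_of_tendsto ht (Filter.Eventually.of_forall fun M => ?_)
      have := aux_lip r hr c s hs0 hs _ _ hu hv M
      rwa [sub_sub_sub_cancel_right] at this
    have huv : ‖u - v‖ ≤ r := by
      have := aux_sub (u - a) (v - a)
      rw [sub_sub_sub_cancel_right] at this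
      exact this.trans (max_le hu hv)
    simp only [φ]
    rw [← map_sub, hσs]
    calc _ ≤ (s * (‖u - v‖ / r)) ^ q := by gcongr
      _ = s ^ q * (‖u - v‖ / r) ^ q := by rw [Real.mul_rpow hs0 (by positivity)]
      _ ≤ s ^ q * (‖u - v‖ / r) := by
        gcongr
        exact Real.rpow_le_self_of_le_one (by positivity) ((div_le_one hr).2 huv) hq
      _ = _ := by ring
  have hmaps : Set.MapsTo φ (Metric.closedBall a r) (Metric.closedBall a r) :=
    fun b hb => hφ.1 ⟨b, hb, rfl⟩
  have hk0 : 0 ≤ s ^ q / r := by positivity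
  have hk1 : s ^ q / r < 1 := (div_lt_one hr).2 hsr
  have hCW : ContractingWith ⟨s ^ q / r, hk0⟩ (hmaps.restrict φ _ _) := by
    refine ⟨by exact_mod_cast hk1, LipschitzWith.of_dist_le_mul fun u v => ?_⟩
    rw [Subtype.dist_eq, Subtype.dist_eq, dist_eq_norm, dist_eq_norm]
    exact hcontr u.1 u.2 v.1 v.2
  have hcomp : IsComplete (Metric.closedBall a r) := Metric.isClosed_closedBall.isComplete
  have huniq : ∀ u ∈ Metric.closedBall a r, ∀ v ∈ Metric.closedBall a r, φ u = u → φ v = v →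
      u = v := by
    intro u hu v hv h1 h2
    have := hcontr u hu v hv
    rw [h1, h2] at this
    by_contra hne
    have hp : 0 < ‖u - v‖ := norm_pos_iff.2 (sub_ne_zero.2 hne)
    nlinarith
  have hex : ∀ b ∈ Metric.closedBall a r, ∃ z ∈ Metric.closedBall a r, φ z = z ∧
      Filter.Tendsto (fun n => φ^[n] b) Filter.atTop (nhds z) := by
    intro b hb
    obtain ⟨z, hz, hfix, ht, _⟩ := hCW.exists_fixedPoint' hcomp hmaps hb (edist_ne_top _ _)
    exact ⟨z, hz, hfix, ht⟩
  obtain ⟨z, hz, hfix, _⟩ := hex a (by simp [hr.le])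
  refine ⟨z, hz, hfix, fun w hw h => huniq w hw z hz h hfix, fun b hb => ?_⟩
  obtain ⟨z', hz', hfix', ht⟩ := hex b hb
  rwa [huniq z' hz' z hz hfix' hfix] at ht
end

section
/- Let K be an algebraically closed field with a nonarchimedean multiplicative absolute value |·|, let f ∈ K[y] be a nonzero polynomial, let a ∈ K and R > 0, and let (cᵢ) be the Taylor coefficients of f about a. Then the number of roots of f in the closed disk D̄(a,R), counted with multiplicity, equals the largest index d with |c_d| R^d = maxᵢ |cᵢ| Rⁱ; and the number of roots of f in the open disk D(a,R), counted with multiplicity, equals the smallest index d with |c_d| R^d = maxᵢ |cᵢ| Rⁱ. -/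
structure GoodSeq (w : ℕ → ℝ) (M : ℝ) (m n : ℕ) : Prop where
  pos : 0 < M
  le : ∀ i, w i ≤ M
  eqm : w m = M
  eqn : w n = M
  ltm : ∀ i, i < m → w i < M
  ltn : ∀ i, n < i → w i < M

structure StepSeq (w w' : ℕ → ℝ) (R β : ℝ) : Prop where
  zero : w' 0 = β * w 0
  le : ∀ i, w' (i+1) ≤ max (R * w i) (β * w (i+1))
  eqr : ∀ i, R * w i < β * w (i+1) → w' (i+1) = β * w (i+1)
  eql : ∀ i, β * w (i+1) < R * w i → w' (i+1) = R * w i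

theorem step_lt {w w' : ℕ → ℝ} {R β M : ℝ} {m n : ℕ} (hR : 0 < R) (hβ : 0 ≤ β)
    (h : GoodSeq w M m n) (s : StepSeq w w' R β) (hlt : β < R) :
    GoodSeq w' (R * M) (m+1) (n+1) := by
  have hp := h.pos
  have hb : ∀ i, β * w i < R * M := fun i =>
    (mul_le_mul_of_nonneg_left (h.le i) hβ).trans_lt (mul_lt_mul_of_pos_right hlt hp)
  have ha : ∀ i, R * w i ≤ R * M := fun i => mul_le_mul_of_nonneg_left (h.le i) hR.le
  refine ⟨by positivity, ?_, ?_, ?_, ?_, ?_⟩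
  · rintro (_ | i)
    · rw [s.zero]; exact (hb 0).le
    · exact (s.le i).trans (max_le (ha i) (hb _).le)
  · rw [s.eql m (by rw [h.eqm]; exact hb _), h.eqm]
  · rw [s.eql n (by rw [h.eqn]; exact hb _), h.eqn]
  · rintro (_ | i) hi
    · rw [s.zero]; exact hb 0
    · exact (s.le i).trans_lt (max_lt (mul_lt_mul_of_pos_left (h.ltm i (by omega)) hR) (hb _))
  · rintro (_ | i) hi
    · omega
    · exact (s.le i).trans_lt (max_lt (mul_lt_mul_of_pos_left (h.ltn i (by omega)) hR) (hb _))

theorem step_eq {w w' : ℕ → ℝ} {R M : ℝ} {m n : ℕ} (hR : 0 < R)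
    (h : GoodSeq w M m n) (s : StepSeq w w' R R) :
    GoodSeq w' (R * M) m (n+1) := by
  have hp := h.pos
  have ha : ∀ i, R * w i ≤ R * M := fun i => mul_le_mul_of_nonneg_left (h.le i) hR.le
  have hl : ∀ i, w i < M → R * w i < R * M := fun i hi => mul_lt_mul_of_pos_left hi hR
  refine ⟨by positivity, ?_, ?_, ?_, ?_, ?_⟩
  · rintro (_ | i)
    · rw [s.zero]; exact ha 0
    · exact (s.le i).trans (max_le (ha i) (ha _))
  · rcases m with _ | m
    · rw [s.zero, h.eqm]
    · rw [s.eqr m (by rw [h.eqm]; exact hl _ (h.ltm _ (by omega))), h.eqm]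
  · rw [s.eql n (by rw [h.eqn]; exact hl _ (h.ltn _ (by omega))), h.eqn]
  · rintro (_ | i) hi
    · rw [s.zero]; exact hl 0 (h.ltm _ hi)
    · exact (s.le i).trans_lt (max_lt (hl _ (h.ltm i (by omega))) (hl _ (h.ltm _ (by omega))))
  · rintro (_ | i) hi
    · omega
    · exact (s.le i).trans_lt (max_lt (hl _ (h.ltn i (by omega))) (hl _ (h.ltn _ (by omega))))

theorem step_gt {w w' : ℕ → ℝ} {R β M : ℝ} {m n : ℕ} (hR : 0 < R)
    (h : GoodSeq w M m n) (s : StepSeq w w' R β) (hlt : R < β) :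
    GoodSeq w' (β * M) m n := by
  have hp := h.pos
  have hβ : 0 < β := hR.trans hlt
  have hb : ∀ i, R * w i < β * M := fun i =>
    (mul_le_mul_of_nonneg_left (h.le i) hR.le).trans_lt (mul_lt_mul_of_pos_right hlt hp)
  have ha : ∀ i, β * w i ≤ β * M := fun i => mul_le_mul_of_nonneg_left (h.le i) hβ.le
  have hl : ∀ i, w i < M → β * w i < β * M := fun i hi => mul_lt_mul_of_pos_left hi hβ
  have he : ∀ i, w i = M → w' i = β * M := by
    rintro (_ | i) hi
    · rw [s.zero, hi]
    · rw [s.eqr i (by rw [hi]; exact hb _), hi]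
  have hlt' : ∀ i, w i < M → w' i < β * M := by
    rintro (_ | i) hi
    · rw [s.zero]; exact hl 0 hi
    · exact (s.le i).trans_lt (max_lt (hb _) (hl _ hi))
  refine ⟨by positivity, ?_, he _ h.eqm, he _ h.eqn, fun i hi => hlt' i (h.ltm i hi),
    fun i hi => hlt' i (h.ltn i hi)⟩
  rintro (_ | i)
  · rw [s.zero]; exact ha 0
  · exact (s.le i).trans (max_le (hb i).le (ha _))

theorem IsNAAbsValue.one' {K : Type*} [Field K] {v : K → ℝ} (h : IsNAAbsValue v) : v 1 = 1 := by
  obtain ⟨_, h0, hm, _⟩ := h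
  have h1 : v 1 ≠ 0 := fun h => one_ne_zero ((h0 1).1 h)
  have := hm 1 1
  rw [mul_one] at this
  exact (mul_left_cancel₀ h1 (by rw [mul_one]; exact this)).symm

theorem IsNAAbsValue.neg' {K : Type*} [Field K] {v : K → ℝ} (h : IsNAAbsValue v) (x : K) :
    v (-x) = v x := by
  have h1 := h.one'
  obtain ⟨hn, h0, hm, _⟩ := h
  have h2 : v (-1) = 1 := by
    have := hm (-1) (-1)
    rw [neg_mul_neg, mul_one, h1] at this
    nlinarith [hn (-1)]
  rw [← neg_one_mul, hm, h2, one_mul]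

theorem IsNAAbsValue.sub_le' {K : Type*} [Field K] {v : K → ℝ} (h : IsNAAbsValue v) (x y : K) :
    v (x - y) ≤ max (v x) (v y) := by
  rw [sub_eq_add_neg, ← h.neg' y]
  exact h.2.2.2 _ _

theorem IsNAAbsValue.sub_eq' {K : Type*} [Field K] {v : K → ℝ} (h : IsNAAbsValue v) (x y : K)
    (hxy : v y < v x) : v (x - y) = v x := by
  apply le_antisymm
  · exact (h.sub_le' x y).trans (max_le le_rfl hxy.le)
  · have := h.2.2.2 (x - y) y
    rw [sub_add_cancel] at this
    rcases le_max_iff.1 this with h | h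
    · exact h
    · linarith

theorem step_poly {K : Type*} [Field K] {v : K → ℝ} (h : IsNAAbsValue v) (g : Polynomial K)
    (b : K) {R : ℝ} (hR : 0 < R) :
    StepSeq (fun i => v (g.coeff i) * R ^ i)
      (fun i => v (((Polynomial.X - Polynomial.C b) * g).coeff i) * R ^ i) R (v b) := by
  have hm := h.2.2.1
  have e1 : ∀ i, R * (v (g.coeff i) * R ^ i) = v (g.coeff i) * R ^ (i+1) := fun i => by ring
  have e2 : ∀ i, v b * (v (g.coeff (i+1)) * R ^ (i+1)) = v (b * g.coeff (i+1)) * R ^ (i+1) :=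
    fun i => by rw [hm]; ring
  have e3 : ∀ i, ((Polynomial.X - Polynomial.C b) * g).coeff (i+1)
      = g.coeff i - b * g.coeff (i+1) := fun i => by
    rw [sub_mul, Polynomial.coeff_sub, Polynomial.coeff_X_mul, Polynomial.coeff_C_mul]
  have hp : ∀ i, 0 < R ^ i := fun i => pow_pos hR i
  refine ⟨?_, ?_, ?_, ?_⟩
  · simp [sub_mul, h.neg', hm]
  · intro i
    simp only [e1, e2, e3]
    rw [← max_mul_of_nonneg _ _ (hp _).le]
    exact mul_le_mul_of_nonneg_right (h.sub_le' _ _) (hp _).le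
  · intro i
    simp only [e1, e2, e3]
    intro hi
    rw [← neg_sub, h.neg', h.sub_eq' _ _ (lt_of_mul_lt_mul_right hi (hp _).le)]
  · intro i
    simp only [e1, e2, e3]
    intro hi
    rw [h.sub_eq' _ _ (lt_of_mul_lt_mul_right hi (hp _).le)]

open scoped Classical in
theorem good_prod {K : Type*} [Field K] {v : K → ℝ} (h : IsNAAbsValue v) (c : K) (hc : c ≠ 0)
    (a : K) {R : ℝ} (hR : 0 < R) (s : Multiset K) :
    ∃ M, GoodSeq (fun i => v ((Polynomial.taylor a (Polynomial.C c *
      (s.map (fun z => Polynomial.X - Polynomial.C z)).prod)).coeff i) * R ^ i) M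
      (Multiset.card (s.filter (fun z => v (z - a) < R)))
      (Multiset.card (s.filter (fun z => v (z - a) ≤ R))) := by
  induction s using Multiset.induction_on with
  | empty =>
    have hv : 0 < v c := lt_of_le_of_ne (h.1 c) (fun e => hc ((h.2.1 c).1 e.symm))
    have h0 : v 0 = 0 := (h.2.1 0).2 rfl
    refine ⟨v c, hv, ?_, ?_, ?_, ?_, ?_⟩
    · rintro (_ | i) <;> simp [Polynomial.coeff_C, h0, hv.le]
    · simp
    · simp
    · simp
    · rintro (_ | i) hi
      · simp at hi
      · simp [Polynomial.coeff_C, h0, hv]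
  | cons z s ih =>
    obtain ⟨M, hM⟩ := ih
    have st := step_poly h (Polynomial.taylor a (Polynomial.C c *
      (s.map (fun z => Polynomial.X - Polynomial.C z)).prod)) (z - a) hR
    have e : Polynomial.taylor a (Polynomial.C c *
      ((z ::ₘ s).map (fun z => Polynomial.X - Polynomial.C z)).prod) =
      (Polynomial.X - Polynomial.C (z - a)) * Polynomial.taylor a (Polynomial.C c *
      (s.map (fun z => Polynomial.X - Polynomial.C z)).prod) := by
      rw [Multiset.map_cons, Multiset.prod_cons, mul_left_comm, Polynomial.taylor_mul]
      congr 1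
      simp only [map_sub, Polynomial.taylor_X, Polynomial.taylor_C]
      ring
    rw [e]
    rcases lt_trichotomy (v (z - a)) R with hz | hz | hz
    · have := step_lt hR (h.1 _) hM st hz
      refine ⟨R * M, ?_⟩
      rw [Multiset.filter_cons_of_pos (p := fun z => v (z - a) < R) _ hz, Multiset.filter_cons_of_pos (p := fun z => v (z - a) ≤ R) _ hz.le,
        Multiset.card_cons, Multiset.card_cons]
      exact this
    · rw [hz] at st
      have := step_eq hR hM st
      refine ⟨R * M, ?_⟩
      rw [Multiset.filter_cons_of_neg (p := fun z => v (z - a) < R) _ (not_lt.2 hz.ge), Multiset.filter_cons_of_pos (p := fun z => v (z - a) ≤ R) _ hz.le,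
        Multiset.card_cons]
      exact this
    · have := step_gt hR hM st hz
      refine ⟨v (z - a) * M, ?_⟩
      rw [Multiset.filter_cons_of_neg (p := fun z => v (z - a) < R) _ (not_lt.2 hz.le), Multiset.filter_cons_of_neg (p := fun z => v (z - a) ≤ R) _ (not_le.2 hz)]
      exact this

theorem GoodSeq.sup_eq {w : ℕ → ℝ} {M : ℝ} {m n : ℕ} (h : GoodSeq w M m n) :
    n = sSup {d | w d = ⨆ i, w i} ∧ m = sInf {d | w d = ⨆ i, w i} := by
  have hs : (⨆ i, w i) = M := by
    apply le_antisymm (ciSup_le h.le)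
    conv_lhs => rw [← h.eqm]
    exact le_ciSup ⟨M, by rintro _ ⟨i, rfl⟩; exact h.le i⟩ m
  rw [hs]
  constructor
  · have : IsGreatest {d | w d = M} n :=
      ⟨h.eqn, fun d hd => not_lt.1 fun hl => (h.ltn d hl).ne hd⟩
    exact this.csSup_eq.symm
  · have : IsLeast {d | w d = M} m :=
      ⟨h.eqm, fun d hd => not_lt.1 fun hl => (h.ltm d hl).ne hd⟩
    exact this.csInf_eq.symm

open scoped Classical in
/-- Over an algebraically closed nonarchimedean field, the number of roots (with
multiplicity) of a nonzero polynomial `f` in the closed disk `D̄(a,R)` is the largest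
index `d` with `|c_d| R^d = maxᵢ |cᵢ| Rⁱ` (Taylor coefficients about `a`), and the number
of roots in the open disk `D(a,R)` is the smallest such index. -/
theorem stmt17 {K : Type*} [Field K] [IsAlgClosed K] (abv : K → ℝ) (habv : IsNAAbsValue abv)
    (f : Polynomial K) (hf : f ≠ 0) (a : K) (R : ℝ) (hR : 0 < R) :
    (Multiset.card (f.roots.filter (fun z => abv (z - a) ≤ R)) =
      sSup {d : ℕ | abv ((Polynomial.taylor a f).coeff d) * R ^ d
        = ⨆ i : ℕ, abv ((Polynomial.taylor a f).coeff i) * R ^ i}) ∧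
    (Multiset.card (f.roots.filter (fun z => abv (z - a) < R)) =
      sInf {d : ℕ | abv ((Polynomial.taylor a f).coeff d) * R ^ d
        = ⨆ i : ℕ, abv ((Polynomial.taylor a f).coeff i) * R ^ i}) := by
  obtain ⟨M, hM⟩ := good_prod habv f.leadingCoeff (Polynomial.leadingCoeff_ne_zero.2 hf) a hR
    f.roots
  have e : Polynomial.C f.leadingCoeff *
      (f.roots.map (fun z => Polynomial.X - Polynomial.C z)).prod = f :=
    (IsAlgClosed.splits f).eq_prod_roots.symm
  rw [e] at hM
  exact hM.sup_eq
end
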